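/- Let μ > 0 and let f : [0,1] → ℝ be such that f_μ := f/ln_μ is monotone decreasing and concave on [0,1]. Then for every positive integer n and every x ∈ (0,1), L_n(f, x) ≤ L_{n+1}(f, x) ≤ f(x). -/

import Mathlib

open Real Filter Set

/-- `logμ μ x = ln(1+μ+x)`. -/
noncomputable def logμ (μ x : ℝ) : ℝ := Real.log (1 + μ + x)

/-- `a μ n x = ln(1 + x/(n(1+μ))) / ln(1 + 1/(n(1+μ)))`. -/
noncomputable def aFun (μ : ℝ) (n : ℕ) (x : ℝ) : ℝ :=
  Real.log (1 + x / (n * (1 + μ))) / Real.log (1 + 1 / (n * (1 + μ)))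

/-- Bernstein basis polynomial `p_{n,k}(y) = C(n,k) y^k (1-y)^(n-k)`. -/
noncomputable def pB (n k : ℕ) (y : ℝ) : ℝ :=
  (n.choose k : ℝ) * y ^ k * (1 - y) ^ (n - k)

/-- Classical Bernstein operator. -/
noncomputable def Bop (n : ℕ) (g : ℝ → ℝ) (y : ℝ) : ℝ :=
  ∑ k ∈ Finset.range (n + 1), g ((k : ℝ) / (n : ℝ)) * pB n k y

/-- Bernstein-type logarithmic operator `L_n`. -/
noncomputable def Lop (μ : ℝ) (n : ℕ) (f : ℝ → ℝ) (x : ℝ) : ℝ :=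
  logμ μ x * ∑ k ∈ Finset.range (n + 1),
    f ((k : ℝ) / (n : ℝ)) * (1 / logμ μ ((k : ℝ) / (n : ℝ))) * pB n k (aFun μ n x)

/-!
Write `g = f / ln_μ`. Then `L_n(f, x) = ln_μ(x) · B_n(g, a_n(x))`, where `B_n` is the classical
Bernstein operator, and `x ≤ a_{n+1}(x) ≤ a_n(x) ≤ 1`. The operator `B_n` maps decreasing functions
to decreasing functions, and `B_n g ≤ B_{n+1} g ≤ g` for concave `g`. Hence
`B_n(g, a_n(x)) ≤ B_n(g, a_{n+1}(x)) ≤ B_{n+1}(g, a_{n+1}(x)) ≤ g(a_{n+1}(x)) ≤ g(x)`.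
The chain for `a_n` says that `t ↦ ln(1 + x t) / ln(1 + t)` is increasing with values in `[x, 1]`,
which follows from the concavity of power functions with exponent in `[0, 1]`.
-/

section BernsteinForm

variable {n : ℕ} {y : ℝ}

lemma pB_eq_eval (n k : ℕ) (y : ℝ) : pB n k y = (bernsteinPolynomial ℝ n k).eval y := by
  simp [pB, bernsteinPolynomial]

lemma pB_nonneg (n k : ℕ) (hy : y ∈ Icc (0 : ℝ) 1) : 0 ≤ pB n k y := by
  have hy₀ : 0 ≤ y := hy.1
  have hy₁ : 0 ≤ 1 - y := sub_nonneg.2 hy.2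
  unfold pB
  positivity

lemma sum_pB (n : ℕ) (y : ℝ) : ∑ k ∈ Finset.range (n + 1), pB n k y = 1 := by
  simp only [pB_eq_eval, ← Polynomial.eval_finsetSum, bernsteinPolynomial.sum, Polynomial.eval_one]

lemma sum_mul_pB (n : ℕ) (y : ℝ) : ∑ k ∈ Finset.range (n + 1), (k : ℝ) * pB n k y = n * y := by
  simpa [Polynomial.eval_finsetSum, pB_eq_eval] using
    congrArg (Polynomial.eval y) (bernsteinPolynomial.sum_smul ℝ n)

lemma mul_pB (n k : ℕ) (y : ℝ) : y * pB n k y = (k + 1) / (n + 1) * pB (n + 1) (k + 1) y := by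
  have hchoose : ((n : ℝ) + 1) * n.choose k = (n + 1).choose (k + 1) * (k + 1) :=
    mod_cast Nat.add_one_mul_choose_eq n k
  simp only [pB, Nat.add_sub_add_right]
  field_simp
  linear_combination y ^ (k + 1) * (1 - y) ^ (n - k) * hchoose

lemma one_sub_mul_pB {k : ℕ} (hk : k ≤ n) (y : ℝ) :
    (1 - y) * pB n k y = (1 - k / (n + 1)) * pB (n + 1) k y := by
  have hchoose : (n.choose k : ℝ) * (n + 1) = (n + 1).choose k * (n + 1 - k) := by
    have := Nat.choose_mul_succ_eq n k
    rw [← Nat.cast_inj (R := ℝ)] at this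
    push_cast [Nat.cast_sub (hk.trans n.le_succ)] at this
    exact this
  simp only [pB, Nat.succ_sub hk, pow_succ]
  field_simp
  linear_combination y ^ k * (1 - y) ^ (n - k) * (1 - y) * hchoose

/-- The polynomial in Bernstein form of degree `n` with control coefficients `c 0, …, c n`,
evaluated at `y`. The coefficients form a total sequence, of which the terms past `n` are ignored,
so that shifts and degree changes need no reindexing. -/
noncomputable def bernsteinForm (n : ℕ) (c : ℕ → ℝ) (y : ℝ) : ℝ :=
  ∑ k ∈ Finset.range (n + 1), c k * pB n k y

lemma mul_bernsteinForm (n : ℕ) (c : ℕ → ℝ) (y : ℝ) :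
    y * bernsteinForm n c y = bernsteinForm (n + 1) (fun k ↦ k / (n + 1) * c (k - 1)) y := by
  rw [bernsteinForm, bernsteinForm, Finset.sum_range_succ' _ (n + 1), Finset.mul_sum]
  simp only [Nat.cast_zero, zero_div, zero_mul, add_zero, Nat.add_sub_cancel, Nat.cast_add_one]
  refine Finset.sum_congr rfl fun k _ ↦ ?_
  linear_combination c k * mul_pB n k y

lemma one_sub_mul_bernsteinForm (n : ℕ) (c : ℕ → ℝ) (y : ℝ) :
    (1 - y) * bernsteinForm n c y = bernsteinForm (n + 1) (fun k ↦ (1 - k / (n + 1)) * c k) y := by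
  have hn : (n : ℝ) + 1 ≠ 0 := by positivity
  rw [bernsteinForm, bernsteinForm, Finset.sum_range_succ _ (n + 1), Finset.mul_sum]
  simp only [Nat.cast_add_one, div_self hn, sub_self, zero_mul, add_zero]
  refine Finset.sum_congr rfl fun k hk ↦ ?_
  linear_combination c k * one_sub_mul_pB (Finset.mem_range_succ_iff.1 hk) y

lemma bernsteinForm_add (n : ℕ) (c d : ℕ → ℝ) (y : ℝ) :
    bernsteinForm n (fun k ↦ c k + d k) y = bernsteinForm n c y + bernsteinForm n d y := by
  simp only [bernsteinForm, add_mul, Finset.sum_add_distrib]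

/-- The coefficients, in degree `n + 1`, of the polynomial whose coefficients in Bernstein form of
degree `n` are `c` (degree elevation). The truncation in `0 - 1` and the value `c (n + 1)` are
harmless, since both occur with weight `0`. -/
noncomputable def elevate (n : ℕ) (c : ℕ → ℝ) (k : ℕ) : ℝ :=
  (1 - k / (n + 1)) * c k + k / (n + 1) * c (k - 1)

lemma bernsteinForm_elevate (n : ℕ) (c : ℕ → ℝ) (y : ℝ) :
    bernsteinForm (n + 1) (elevate n c) y = bernsteinForm n c y := by
  unfold elevate
  rw [bernsteinForm_add, ← one_sub_mul_bernsteinForm, ← mul_bernsteinForm]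
  ring

lemma bernsteinForm_succ (n : ℕ) (c : ℕ → ℝ) (y : ℝ) :
    bernsteinForm (n + 1) c y =
      (1 - y) * bernsteinForm n c y + y * bernsteinForm n (fun k ↦ c (k + 1)) y := by
  rw [one_sub_mul_bernsteinForm, mul_bernsteinForm, ← bernsteinForm_add]
  congr 1
  funext k
  cases k with
  | zero => simp
  | succ k => simp only [Nat.add_sub_cancel]; ring

lemma bernsteinForm_mono {c d : ℕ → ℝ} (hy : y ∈ Icc (0 : ℝ) 1) (hcd : ∀ k ≤ n, c k ≤ d k) :
    bernsteinForm n c y ≤ bernsteinForm n d y :=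
  Finset.sum_le_sum fun k hk ↦
    mul_le_mul_of_nonneg_right (hcd k (Finset.mem_range_succ_iff.1 hk)) (pB_nonneg n k hy)

lemma bernsteinForm_antitoneOn {c : ℕ → ℝ} (hc : AntitoneOn c (Iic n)) :
    AntitoneOn (bernsteinForm n c) (Icc 0 1) := by
  induction n generalizing c with
  | zero => intro y _ z _ _; simp [bernsteinForm, pB]
  | succ n ih =>
    intro y hy z hz hyz
    let c' : ℕ → ℝ := fun k ↦ c (k + 1)
    have hleft : bernsteinForm n c z ≤ bernsteinForm n c y :=
      ih (hc.mono (Iic_subset_Iic.2 n.le_succ)) hy hz hyz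
    have hright : bernsteinForm n c' z ≤ bernsteinForm n c' y :=
      ih (fun _ hi _ hj hij ↦ hc (Nat.succ_le_succ hi) (Nat.succ_le_succ hj)
        (Nat.succ_le_succ hij)) hy hz hyz
    have hshift : bernsteinForm n c' y ≤ bernsteinForm n c y :=
      bernsteinForm_mono hy fun k hk ↦
        hc (hk.trans n.le_succ) (Nat.succ_le_succ hk) k.le_succ
    have hz₁ : 0 ≤ 1 - z := sub_nonneg.2 hz.2
    calc bernsteinForm (n + 1) c z
        = (1 - z) * bernsteinForm n c z + z * bernsteinForm n c' z := bernsteinForm_succ n c z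
      _ ≤ (1 - z) * bernsteinForm n c y + z * bernsteinForm n c' y :=
          add_le_add (mul_le_mul_of_nonneg_left hleft hz₁) (mul_le_mul_of_nonneg_left hright hz.1)
      _ ≤ (1 - y) * bernsteinForm n c y + y * bernsteinForm n c' y := by
          linarith [mul_le_mul_of_nonneg_left hshift (sub_nonneg.2 hyz)]
      _ = bernsteinForm (n + 1) c y := (bernsteinForm_succ n c y).symm

end BernsteinForm

section BernsteinOperator

variable {n : ℕ} {g : ℝ → ℝ} {y : ℝ}

lemma Bop_eq_bernsteinForm (n : ℕ) (g : ℝ → ℝ) (y : ℝ) :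
    Bop n g y = bernsteinForm n (fun k ↦ g (k / n)) y :=
  rfl

lemma natCast_div_mem_Icc {k : ℕ} (hk : k ≤ n) : (k / n : ℝ) ∈ Icc (0 : ℝ) 1 :=
  unitInterval.div_mem k.cast_nonneg n.cast_nonneg (Nat.cast_le.2 hk)

lemma Bop_antitoneOn (n : ℕ) (hg : AntitoneOn g (Icc 0 1)) : AntitoneOn (Bop n g) (Icc 0 1) :=
  bernsteinForm_antitoneOn fun i hi j hj hij ↦
    hg (natCast_div_mem_Icc hi) (natCast_div_mem_Icc hj) (by gcongr)

lemma elevate_le_of_concaveOn (hg : ConcaveOn ℝ (Icc 0 1) g) (hn : 0 < n) {k : ℕ}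
    (hk : k ≤ n + 1) : elevate n (fun i ↦ g (i / n)) k ≤ g (k / (n + 1)) := by
  have hn₀ : (n : ℝ) ≠ 0 := by positivity
  unfold elevate
  rcases k with _ | k
  · simp
  rw [Nat.add_sub_cancel]
  rcases (Nat.succ_le_succ_iff.1 hk).eq_or_lt with rfl | hkn
  · have hk₁ : (k : ℝ) + 1 ≠ 0 := by positivity
    simp [hn₀, hk₁]
  · have hw : ((k + 1 : ℕ) / (n + 1) : ℝ) ∈ Icc (0 : ℝ) 1 := mod_cast natCast_div_mem_Icc hk
    calc (1 - (k + 1 : ℕ) / (n + 1)) * g ((k + 1 : ℕ) / n) + (k + 1 : ℕ) / (n + 1) * g (k / n)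
        ≤ g ((1 - (k + 1 : ℕ) / (n + 1)) * ((k + 1 : ℕ) / n) + (k + 1 : ℕ) / (n + 1) * (k / n)) :=
          hg.2 (natCast_div_mem_Icc hkn) (natCast_div_mem_Icc hkn.le) (sub_nonneg.2 hw.2) hw.1
            (sub_add_cancel _ _)
      _ = g ((k + 1 : ℕ) / (n + 1)) := by
          congr 1
          push_cast
          field_simp
          ring

lemma Bop_le_Bop_succ (hg : ConcaveOn ℝ (Icc 0 1) g) (hn : 0 < n) (hy : y ∈ Icc (0 : ℝ) 1) :
    Bop n g y ≤ Bop (n + 1) g y := by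
  rw [Bop_eq_bernsteinForm, Bop_eq_bernsteinForm, ← bernsteinForm_elevate]
  exact bernsteinForm_mono hy fun k hk ↦ mod_cast elevate_le_of_concaveOn hg hn hk

lemma Bop_le_of_concaveOn (hg : ConcaveOn ℝ (Icc 0 1) g) (hn : 0 < n) (hy : y ∈ Icc (0 : ℝ) 1) :
    Bop n g y ≤ g y := by
  have hmean : ∑ k ∈ Finset.range (n + 1), pB n k y • (k / n : ℝ) = y := by
    have hn₀ : (n : ℝ) ≠ 0 := by positivity
    calc ∑ k ∈ Finset.range (n + 1), pB n k y • (k / n : ℝ)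
        = (∑ k ∈ Finset.range (n + 1), (k : ℝ) * pB n k y) / n := by
          rw [Finset.sum_div]
          exact Finset.sum_congr rfl fun k _ ↦ by rw [smul_eq_mul]; ring
      _ = y := by rw [sum_mul_pB, mul_div_cancel_left₀ y hn₀]
  calc Bop n g y = ∑ k ∈ Finset.range (n + 1), pB n k y • g (k / n) := by
        simp only [Bop, smul_eq_mul, mul_comm]
    _ ≤ g (∑ k ∈ Finset.range (n + 1), pB n k y • (k / n : ℝ)) :=
        hg.le_map_sum (fun k _ ↦ pB_nonneg n k hy) (sum_pB n y)
          fun k hk ↦ natCast_div_mem_Icc (Finset.mem_range_succ_iff.1 hk)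
    _ = g y := by rw [hmean]

end BernsteinOperator

section LogRatio

variable {x t : ℝ}

/-- The function `t ↦ ln(1 + x t) / ln(1 + t)`, whose values at `t = 1 / (n (1 + μ))` are the nodes
`a_n(x)` of the operator `L_n`. -/
noncomputable def logRatio (x t : ℝ) : ℝ :=
  Real.log (1 + x * t) / Real.log (1 + t)

lemma one_add_mul_rpow_sub_one_le_rpow {r : ℝ} (hx : x ∈ Icc (0 : ℝ) 1) (hr : r ∈ Icc (0 : ℝ) 1)
    (ht : -1 ≤ t) : 1 + x * ((1 + t) ^ r - 1) ≤ (1 + x * t) ^ r := by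
  calc 1 + x * ((1 + t) ^ r - 1) = (1 - x) • (1 : ℝ) ^ r + x • (1 + t) ^ r := by
        rw [Real.one_rpow, smul_eq_mul, smul_eq_mul]
        ring
    _ ≤ ((1 - x) • (1 : ℝ) + x • (1 + t)) ^ r :=
        (Real.concaveOn_rpow hr.1 hr.2).2 (mem_Ici.2 zero_le_one) (mem_Ici.2 (by linarith))
          (sub_nonneg.2 hx.2) hx.1 (sub_add_cancel 1 x)
    _ = (1 + x * t) ^ r := by
        congr 1
        simp only [smul_eq_mul]
        ring

lemma logRatio_monotoneOn (hx : x ∈ Icc (0 : ℝ) 1) : MonotoneOn (logRatio x) (Ioi 0) := by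
  intro s (hs : 0 < s) t (ht : 0 < t) hst
  have hx₀ : 0 ≤ x := hx.1
  have hlogs : 0 < Real.log (1 + s) := Real.log_pos (by linarith)
  have hlogt : 0 < Real.log (1 + t) := Real.log_pos (by linarith)
  let r := Real.log (1 + s) / Real.log (1 + t)
  have hr : r ∈ Icc (0 : ℝ) 1 :=
    unitInterval.div_mem hlogs.le hlogt.le (Real.log_le_log (by linarith) (by linarith))
  have hpow : (1 + t) ^ r = 1 + s := by
    rw [Real.rpow_def_of_pos (by linarith), mul_div_cancel₀ _ hlogt.ne',
      Real.exp_log (by linarith)]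
  have hle : 1 + x * s ≤ (1 + x * t) ^ r := by
    simpa [hpow] using one_add_mul_rpow_sub_one_le_rpow hx hr (by linarith : -1 ≤ t)
  have hlog : Real.log (1 + x * s) ≤ r * Real.log (1 + x * t) := by
    rw [← Real.log_rpow (by positivity)]
    exact Real.log_le_log (by positivity) hle
  rw [logRatio, div_le_iff₀ hlogs]
  calc Real.log (1 + x * s) ≤ r * Real.log (1 + x * t) := hlog
    _ = logRatio x t * Real.log (1 + s) := by
        simp only [r, logRatio]
        ring

lemma le_logRatio (hx : x ∈ Icc (0 : ℝ) 1) (ht : 0 < t) : x ≤ logRatio x t := by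
  rw [logRatio, le_div_iff₀ (Real.log_pos (by linarith)), ← Real.log_rpow (by linarith)]
  exact Real.log_le_log (by positivity)
    (rpow_one_add_le_one_add_mul_self (by linarith) hx.1 hx.2)

lemma logRatio_le_one (hx : x ∈ Icc (0 : ℝ) 1) (ht : 0 < t) : logRatio x t ≤ 1 := by
  have hx₀ : 0 ≤ x := hx.1
  rw [logRatio, div_le_one (Real.log_pos (by linarith))]
  exact Real.log_le_log (by positivity) (by linarith [mul_le_of_le_one_left ht.le hx.2])

end LogRatio

section LogOperator

variable {μ x : ℝ} {n : ℕ}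

lemma aFun_eq_logRatio (μ : ℝ) (n : ℕ) (x : ℝ) : aFun μ n x = logRatio x (1 / (n * (1 + μ))) := by
  rw [aFun, logRatio, mul_one_div]

lemma one_div_mul_one_add_pos (hμ : -1 < μ) (hn : 0 < n) : 0 < 1 / (n * (1 + μ)) := by
  have : 0 < 1 + μ := by linarith
  positivity

lemma aFun_mem_Icc (hμ : -1 < μ) (hn : 0 < n) (hx : x ∈ Icc (0 : ℝ) 1) :
    aFun μ n x ∈ Icc x 1 := by
  rw [aFun_eq_logRatio]
  exact ⟨le_logRatio hx (one_div_mul_one_add_pos hμ hn),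
    logRatio_le_one hx (one_div_mul_one_add_pos hμ hn)⟩

lemma aFun_le_aFun (hμ : -1 < μ) {m : ℕ} (hm : 0 < m) (hmn : m ≤ n) (hx : x ∈ Icc (0 : ℝ) 1) :
    aFun μ n x ≤ aFun μ m x := by
  have hμ₀ : 0 < 1 + μ := by linarith
  rw [aFun_eq_logRatio, aFun_eq_logRatio]
  exact logRatio_monotoneOn hx (one_div_mul_one_add_pos hμ (hm.trans_le hmn))
    (one_div_mul_one_add_pos hμ hm) (by gcongr)

lemma Lop_eq_logμ_mul_Bop (μ : ℝ) (n : ℕ) (f : ℝ → ℝ) (x : ℝ) :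
    Lop μ n f x = logμ μ x * Bop n (fun t ↦ f t / logμ μ t) (aFun μ n x) := by
  simp only [Lop, Bop, mul_one_div]

end LogOperator

theorem stmt19 (μ : ℝ) (hμ : 0 < μ) (f : ℝ → ℝ)
    (hmono : AntitoneOn (fun t => f t / logμ μ t) (Set.Icc (0:ℝ) 1))
    (hconc : ConcaveOn ℝ (Set.Icc (0:ℝ) 1) (fun t => f t / logμ μ t))
    (n : ℕ) (hn : 0 < n) (x : ℝ) (hx : x ∈ Set.Ioo (0:ℝ) 1) :
    Lop μ n f x ≤ Lop μ (n + 1) f x ∧ Lop μ (n + 1) f x ≤ f x := by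
  have hx' : x ∈ Icc (0 : ℝ) 1 := Ioo_subset_Icc_self hx
  have hμ' : -1 < μ := by linarith
  have hlog : 0 < logμ μ x := Real.log_pos (by linarith [hx.1])
  have ha : aFun μ n x ∈ Icc (0 : ℝ) 1 := Icc_subset_Icc_left hx'.1 (aFun_mem_Icc hμ' hn hx')
  have hxb : aFun μ (n + 1) x ∈ Icc x 1 := aFun_mem_Icc hμ' n.succ_pos hx'
  have hb : aFun μ (n + 1) x ∈ Icc (0 : ℝ) 1 := Icc_subset_Icc_left hx'.1 hxb
  have hba : aFun μ (n + 1) x ≤ aFun μ n x := aFun_le_aFun hμ' hn n.le_succ hx'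
  simp only [Lop_eq_logμ_mul_Bop]
  constructor
  · exact mul_le_mul_of_nonneg_left
      ((Bop_antitoneOn n hmono hb ha hba).trans (Bop_le_Bop_succ hconc hn hb)) hlog.le
  · rw [← le_div_iff₀' hlog]
    exact (Bop_le_of_concaveOn hconc n.succ_pos hb).trans (hmono hx' hb hxb.1)
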